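/- Let {X_t}_{t∈ℤ} be a strictly stationary mean-zero real sequence that is bounded: |X₀| ≤ C almost surely. Let φ(i) denote its φ-mixing coefficients. Then for every even-type integer p = 2, 3, … and every n ≥ 1, E|S_n|^p ≤ ( 8C²p Σ_{i=0}^{n−1} (n−i)φ(i) )^{p/2}, where S_n = Σ_{i=1}^n X_i. -/

import Mathlib

open MeasureTheory ProbabilityTheory Set Finset

variable {Ω : Type*}

/-- The σ-field of the past up to time `j` of a real process. -/
def pastSigma (X : ℤ → Ω → ℝ) (j : ℤ) : MeasurableSpace Ω :=
  ⨆ (t : ℤ) (_ : t ≤ j), MeasurableSpace.comap (X t) inferInstance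

/-- The σ-field of the future from time `j` on of a real process. -/
def futureSigma (X : ℤ → Ω → ℝ) (j : ℤ) : MeasurableSpace Ω :=
  ⨆ (t : ℤ) (_ : j ≤ t), MeasurableSpace.comap (X t) inferInstance

/-- The set of values whose supremum defines the φ-dependence coefficient
between two sub-σ-fields: values `|P(B|A) − P(B)|`. -/
def phiSet (m0 : MeasurableSpace Ω) (μ : Measure Ω)
    (mA mB : MeasurableSpace Ω) : Set ℝ :=
  {x | ∃ A B : Set Ω, MeasurableSet[mA] A ∧ MeasurableSet[mB] B ∧ μ A ≠ 0 ∧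
    x = |(μ (A ∩ B) / μ A).toReal - (μ B).toReal|}

/-- The φ-mixing coefficient `φ(i) = sup_j φ(σ(X_t, t ≤ j), σ(X_t, t ≥ j+i))`. -/
noncomputable def phiCoef (m0 : MeasurableSpace Ω) (μ : Measure Ω)
    (X : ℤ → Ω → ℝ) (i : ℕ) : ℝ :=
  sSup (⋃ j : ℤ, phiSet m0 μ (pastSigma X j) (futureSigma X (j + i)))


theorem dd_one (q : ℕ) (x : ℝ) : HasDerivAt (fun x : ℝ => |x| ^ q * x) ((q + 1) * |x| ^ q) x := by
  rcases eq_or_ne x 0 with rfl | hx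
  · rw [hasDerivAt_iff_tendsto_slope]
    have h1 : Filter.Tendsto (fun y : ℝ => |y| ^ q) (nhdsWithin 0 {0}ᶜ) (nhds (|(0:ℝ)| ^ q)) := by
      apply Filter.Tendsto.mono_left _ nhdsWithin_le_nhds
      exact (Continuous.tendsto (by fun_prop) 0)
    have e : ((q:ℝ) + 1) * |(0:ℝ)| ^ q = |(0:ℝ)| ^ q := by
      rcases Nat.eq_zero_or_pos q with rfl | h
      · simp
      · simp [h.ne']
    rw [e]
    refine h1.congr' ?_
    filter_upwards [self_mem_nhdsWithin] with y hy
    have hy : y ≠ 0 := hy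
    simp [slope_def_field]
    field_simp
  · have h := ((hasDerivAt_abs hx).pow q).mul (hasDerivAt_id x)
    refine h.congr_deriv ?_
    rcases Nat.eq_zero_or_pos q with rfl | hq
    · simp
    · obtain ⟨k, rfl⟩ : ∃ k, q = k + 1 := ⟨q - 1, by omega⟩
      have : (SignType.sign x : ℝ) * x = |x| := by
        rw [mul_comm]; exact self_mul_sign x
      simp only [id, Pi.pow_apply, Nat.add_sub_cancel]
      rw [mul_assoc, this]
      push_cast
      ring

theorem dd_two (q : ℕ) (x : ℝ) :
    HasDerivAt (fun x : ℝ => |x| ^ (q + 2)) ((q + 2) * (|x| ^ q * x)) x := by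
  have h := (dd_one q x).mul (hasDerivAt_id x)
  have e : (fun x : ℝ => |x| ^ (q + 2)) = (fun x : ℝ => |x| ^ q * x) * id := by
    funext y
    simp only [Pi.mul_apply, id]
    rw [pow_add, sq_abs]; ring
  rw [e]
  refine h.congr_deriv ?_
  simp only [id]; ring

theorem dd_path (q : ℕ) (V Y S t : ℝ) :
    HasDerivAt (fun t : ℝ => |V + t * Y| ^ (q + 2) +
        (q + 2) * (|V + t * Y| ^ q * (V + t * Y)) * (S - (V + t * Y)))
      ((q + 2) * (q + 1) * (|V + t * Y| ^ q * Y * (S - (V + t * Y)))) t := by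
  have hU : HasDerivAt (fun t : ℝ => V + t * Y) Y t := by
    simpa using ((hasDerivAt_id t).mul_const Y).const_add V
  have h1 := (dd_two q (V + t * Y)).comp t hU
  have h2 := ((dd_one q (V + t * Y)).comp t hU).const_mul ((q : ℝ) + 2)
  have h3 := h1.add (h2.mul (hU.const_sub S))
  refine h3.congr_deriv ?_
  simp only [Function.comp]
  ring

theorem dd_integral {Ω : Type*} {m0 : MeasurableSpace Ω} (μ : Measure Ω) [IsProbabilityMeasure μ]
    (q : ℕ) (V Y S : Ω → ℝ) (hV : Measurable V) (hY : Measurable Y) (hS : Measurable S)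
    (D : ℝ) (bV : ∀ᵐ ω ∂μ, |V ω| ≤ D) (bY : ∀ᵐ ω ∂μ, |Y ω| ≤ D) (bS : ∀ᵐ ω ∂μ, |S ω| ≤ D)
    (t : ℝ) :
    HasDerivAt (fun t : ℝ => ∫ ω, |V ω + t * Y ω| ^ (q + 2) +
        (q + 2) * (|V ω + t * Y ω| ^ q * (V ω + t * Y ω)) * (S ω - (V ω + t * Y ω)) ∂μ)
      (∫ ω, (q + 2) * (q + 1) * (|V ω + t * Y ω| ^ q * Y ω * (S ω - (V ω + t * Y ω))) ∂μ) t := by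
  have bU : ∀ᵐ ω ∂μ, ∀ x ∈ Metric.ball t 1, |V ω + x * Y ω| ≤ D + (|t| + 1) * D := by
    filter_upwards [bV, bY] with ω h1 h2 x hx
    have hx' : |x| ≤ |t| + 1 := by
      rw [Metric.mem_ball, Real.dist_eq] at hx
      have := abs_sub_abs_le_abs_sub x t
      linarith
    calc |V ω + x * Y ω| ≤ |V ω| + |x * Y ω| := abs_add_le _ _
      _ = |V ω| + |x| * |Y ω| := by rw [abs_mul]
      _ ≤ D + (|t| + 1) * D := by
        gcongr
  set E := D + (|t| + 1) * D with hE
  have hF : ∀ x : ℝ, Measurable (fun ω => |V ω + x * Y ω| ^ (q + 2) +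
        (q + 2) * (|V ω + x * Y ω| ^ q * (V ω + x * Y ω)) * (S ω - (V ω + x * Y ω))) := by
    intro x; fun_prop
  refine (hasDerivAt_integral_of_dominated_loc_of_deriv_le (s := Metric.ball t 1)
    (F := fun (t : ℝ) ω => |V ω + t * Y ω| ^ (q + 2) +
        (q + 2) * (|V ω + t * Y ω| ^ q * (V ω + t * Y ω)) * (S ω - (V ω + t * Y ω)))
    (F' := fun (t : ℝ) ω => (q + 2) * (q + 1) * (|V ω + t * Y ω| ^ q * Y ω * (S ω - (V ω + t * Y ω))))
    (bound := fun _ => ((q:ℝ) + 2) * (q + 1) * (E ^ q * D * (D + E)))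
    (Metric.ball_mem_nhds t one_pos) (Filter.Eventually.of_forall fun x => (hF x).aestronglyMeasurable) ?_ ?_ ?_
    (integrable_const _) (Filter.Eventually.of_forall fun ω x _ => dd_path q _ _ _ _)).2
  · refine Integrable.of_bound (hF t).aestronglyMeasurable (E ^ (q+2) + (q + 2) * (E ^ q * E) * (D + E)) ?_
    filter_upwards [bU, bS] with ω h1 h2
    have h1 := h1 t (Metric.mem_ball_self one_pos)
    rw [Real.norm_eq_abs]
    have h0 : 0 ≤ E := (abs_nonneg _).trans h1
    have h3 : |S ω - (V ω + t * Y ω)| ≤ D + E := (abs_sub _ _).trans (add_le_add h2 h1)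
    refine (abs_add_le _ _).trans ?_
    simp only [abs_mul, abs_pow, abs_abs]
    rw [abs_of_nonneg (by positivity : (0:ℝ) ≤ q + 2)]
    gcongr
  · exact Measurable.aestronglyMeasurable (by fun_prop)
  · filter_upwards [bU, bS, bY] with ω h1 h2 h4 x hx
    have h1 := h1 x hx
    rw [Real.norm_eq_abs]
    have h0 : 0 ≤ E := (abs_nonneg _).trans h1
    have h3 : |S ω - (V ω + x * Y ω)| ≤ D + E := (abs_sub _ _).trans (add_le_add h2 h1)
    simp only [abs_mul, abs_pow, abs_abs]
    rw [abs_of_nonneg (by positivity : (0:ℝ) ≤ q + 2), abs_of_nonneg (by positivity : (0:ℝ) ≤ q + 1)]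
    have h5 : 0 ≤ D := (abs_nonneg _).trans h4
    gcongr

theorem phi_past_le {Ω : Type*} (m0 : MeasurableSpace Ω) (X : ℤ → Ω → ℝ) (hmeas : ∀ t, Measurable (X t))
    (j : ℤ) : pastSigma X j ≤ m0 :=
  iSup₂_le fun t _ => (hmeas t).comap_le

theorem phi_bdd {Ω : Type*} (m0 : MeasurableSpace Ω) (μ : Measure Ω) [IsProbabilityMeasure μ]
    (X : ℤ → Ω → ℝ) (i : ℕ) :
    BddAbove (⋃ j : ℤ, phiSet m0 μ (pastSigma X j) (futureSigma X (j + i))) := by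
  refine ⟨1, ?_⟩
  rintro x hx
  obtain ⟨j, A, B, -, -, hA, rfl⟩ := Set.mem_iUnion.1 hx
  have h1 : (μ (A ∩ B) / μ A).toReal ≤ 1 := by
    apply ENNReal.toReal_le_of_le_ofReal zero_le_one
    rw [ENNReal.ofReal_one]
    exact ENNReal.div_le_of_le_mul (by rw [one_mul]; exact measure_mono Set.inter_subset_left)
  have h2 : (μ B).toReal ≤ 1 := by
    have := prob_le_one (μ := μ) (s := B)
    exact ENNReal.toReal_le_of_le_ofReal zero_le_one (by simpa using this)
  have h3 : 0 ≤ (μ (A ∩ B) / μ A).toReal := ENNReal.toReal_nonneg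
  have h4 : 0 ≤ (μ B).toReal := ENNReal.toReal_nonneg
  rw [abs_le]; constructor <;> linarith

theorem phi_nonneg {Ω : Type*} (m0 : MeasurableSpace Ω) (μ : Measure Ω) [IsProbabilityMeasure μ]
    (X : ℤ → Ω → ℝ) (i : ℕ) : 0 ≤ phiCoef m0 μ X i := by
  apply Real.sSup_nonneg
  rintro x hx
  obtain ⟨j, A, B, -, -, hA, rfl⟩ := Set.mem_iUnion.1 hx
  exact abs_nonneg _

theorem phi_set {Ω : Type*} (m0 : MeasurableSpace Ω) (μ : Measure Ω) [IsProbabilityMeasure μ]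
    (X : ℤ → Ω → ℝ) (i : ℕ) (j : ℤ) (A B : Set Ω)
    (hA : MeasurableSet[pastSigma X j] A) (hB : MeasurableSet[futureSigma X (j + i)] B) :
    |μ.real (A ∩ B) - μ.real A * μ.real B| ≤ phiCoef m0 μ X i * μ.real A := by
  by_cases h : μ A = 0
  · have : μ (A ∩ B) = 0 := measure_mono_null Set.inter_subset_left h
    simp [Measure.real, h, this]
  · have h1 := le_csSup (phi_bdd m0 μ X i) (Set.mem_iUnion.2 ⟨j, A, B, hA, hB, h, rfl⟩)
    have hp : 0 < μ.real A := ENNReal.toReal_pos h (measure_ne_top _ _)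
    change |_| ≤ phiCoef m0 μ X i at h1
    rw [ENNReal.toReal_div] at h1
    change |μ.real (A ∩ B) / μ.real A - μ.real B| ≤ _ at h1
    calc _ = |μ.real (A ∩ B) / μ.real A - μ.real B| * μ.real A := by
          rw [← abs_of_pos hp, ← abs_mul, abs_of_pos hp]; congr 1; field_simp
      _ ≤ _ := by gcongr

theorem phi_layer {Ω : Type*} {m0 : MeasurableSpace Ω} (ν : Measure Ω) [IsFiniteMeasure ν] (g : Ω → ℝ) (M : ℝ) :
    IntegrableOn (fun t : ℝ => ν.real {a | t ≤ g a}) (Set.Ioc 0 M) := by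
  have : AntitoneOn (fun t : ℝ => ν.real {a | t ≤ g a}) (Set.Icc 0 M) := by
    intro s _ t _ hst
    exact measureReal_mono (fun a ha => hst.trans ha)
  exact (this.integrableOn_isCompact isCompact_Icc).mono_set Set.Ioc_subset_Icc_self

theorem phi_setint {Ω : Type*} (m0 : MeasurableSpace Ω) (μ : Measure Ω) [IsProbabilityMeasure μ]
    (X : ℤ → Ω → ℝ) (hmeas : ∀ t, Measurable (X t)) (C : ℝ) (i : ℕ) (j : ℤ)
    (hmean : ∫ ω, X (j + i) ω ∂μ = 0) (hbdd : ∀ᵐ ω ∂μ, |X (j + i) ω| ≤ C) (A : Set Ω)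
    (hA : MeasurableSet[pastSigma X j] A) :
    |∫ ω in A, X (j + i) ω ∂μ| ≤ 2 * C * phiCoef m0 μ X i * μ.real A := by
  set Z := X (j + i) with hZ
  have hC : 0 ≤ C := by
    obtain ⟨ω, h⟩ := hbdd.exists
    exact (abs_nonneg _).trans h
  have hm : Measurable Z := hmeas _
  have hi : Integrable Z μ := Integrable.of_bound hm.aestronglyMeasurable C hbdd
  have hA0 : MeasurableSet A := phi_past_le m0 X hmeas j A hA
  have hg : Integrable (fun ω => Z ω + C) μ := hi.add (integrable_const _)
  have hg0 : 0 ≤ᵐ[μ] (fun ω => Z ω + C) := by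
    filter_upwards [hbdd] with ω h
    have := (abs_le.1 h).1
    simp only [Pi.zero_apply]; linarith
  have hg1 : (fun ω => Z ω + C) ≤ᵐ[μ] (fun _ => 2 * C) := by
    filter_upwards [hbdd] with ω h
    have := (abs_le.1 h).2
    linarith
  have e1 := hg.integral_eq_integral_Ioc_meas_le hg0 hg1
  have e2 := (hg.restrict (s := A)).integral_eq_integral_Ioc_meas_le (ae_restrict_of_ae hg0) (ae_restrict_of_ae hg1)
  rw [integral_add hi (integrable_const _), hmean] at e1
  rw [integral_add hi.restrict (integrable_const _)] at e2
  simp at e1 e2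
  have key : ∫ ω in A, Z ω ∂μ = ∫ t in Set.Ioc 0 (2 * C),
      ((μ.restrict A).real {a | t ≤ Z a + C} - μ.real A * μ.real {a | t ≤ Z a + C}) := by
    rw [integral_sub (phi_layer _ _ _) ((phi_layer _ _ _).const_mul _), integral_const_mul, ← e2, ← e1]
    ring
  rw [key, ← Real.norm_eq_abs]
  refine (norm_setIntegral_le_of_norm_le_const (C := phiCoef m0 μ X i * μ.real A) measure_Ioc_lt_top ?_).trans ?_
  · intro t _
    have hB : MeasurableSet[futureSigma X (j + i)] {a | t ≤ Z a + C} := by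
      have h1 : MeasurableSpace.comap (X (j + i)) inferInstance ≤ futureSigma X (j + i) :=
        le_iSup₂_of_le (j + i) le_rfl le_rfl
      apply h1
      refine ⟨Set.Ici (t - C), measurableSet_Ici, ?_⟩
      ext a; simp [hZ]
    have hB0 : MeasurableSet {a | t ≤ Z a + C} := measurableSet_le measurable_const (hm.add_const _)
    rw [Real.norm_eq_abs, measureReal_restrict_apply hB0, Set.inter_comm]
    exact phi_set m0 μ X i j A _ hA hB
  · simp [Measure.real, hC]
    apply le_of_eq; ring

theorem phi_cov {Ω : Type*} (m m0 : MeasurableSpace Ω) (hm : m ≤ m0) (μ : Measure Ω) [IsProbabilityMeasure μ]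
    (Z : Ω → ℝ) (hZ : Integrable Z μ) (d : ℝ)
    (h : ∀ A, MeasurableSet[m] A → |∫ ω in A, Z ω ∂μ| ≤ d * μ.real A)
    (f : Ω → ℝ) (hf : StronglyMeasurable[m] f) (hfi : Integrable f μ) (hfZ : Integrable (fun ω => f ω * Z ω) μ) :
    |∫ ω, f ω * Z ω ∂μ| ≤ d * ∫ ω, |f ω| ∂μ := by
  have hint : Integrable (μ[Z|m]) μ := integrable_condExp
  have hup : μ[Z|m] ≤ᵐ[μ] fun _ => d := by
    apply ae_le_of_ae_le_trim (hm := hm)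
    refine ae_le_of_forall_setIntegral_le (hint.trim hm stronglyMeasurable_condExp) (integrable_const _) ?_
    intro s hs _
    rw [← setIntegral_trim hm stronglyMeasurable_condExp hs, setIntegral_condExp hm hZ hs]
    rw [setIntegral_const, smul_eq_mul, mul_comm, Measure.real, trim_measurableSet_eq hm hs]
    exact (le_abs_self _).trans (h s hs)
  have hlo : (fun _ => -d) ≤ᵐ[μ] μ[Z|m] := by
    apply ae_le_of_ae_le_trim (hm := hm)
    refine ae_le_of_forall_setIntegral_le (integrable_const _) (hint.trim hm stronglyMeasurable_condExp) ?_
    intro s hs _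
    rw [← setIntegral_trim hm stronglyMeasurable_condExp hs, setIntegral_condExp hm hZ hs]
    rw [setIntegral_const, smul_eq_mul, mul_comm, Measure.real, trim_measurableSet_eq hm hs]
    have := (abs_le.1 (h s hs)).1
    rw [Measure.real] at this
    linarith
  have e := condExp_mul_of_stronglyMeasurable_left hf hfZ hZ
  have e2 : ∫ ω, f ω * Z ω ∂μ = ∫ ω, f ω * (μ[Z|m]) ω ∂μ := by
    rw [← integral_condExp hm]
    exact integral_congr_ae e
  rw [e2, ← integral_const_mul, ← Real.norm_eq_abs]
  refine norm_integral_le_of_norm_le (hfi.abs.const_mul d) ?_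
  filter_upwards [hup, hlo] with ω h1 h2
  rw [Real.norm_eq_abs, abs_mul, mul_comm]
  gcongr
  exact abs_le.2 ⟨h2, h1⟩

theorem dd_weight (N m : ℕ) (hm : m < N) (a g : ℕ → ℝ) (t : ℝ) :
    ∑ k ∈ Finset.range N, (if k < m then a k else if k = m then t * a k else 0) * g k =
      ∑ k ∈ Finset.range m, a k * g k + t * (a m * g m) := by
  rw [← Finset.sum_range_add_sum_Ico _ hm.le, Finset.sum_eq_sum_Ico_succ_bot hm]
  have h1 : ∑ k ∈ Finset.range m, (if k < m then a k else if k = m then t * a k else 0) * g k =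
      ∑ k ∈ Finset.range m, a k * g k :=
    Finset.sum_congr rfl fun k hk => by rw [if_pos (Finset.mem_range.1 hk)]
  have h2 : ∑ k ∈ Finset.Ico (m + 1) N, (if k < m then a k else if k = m then t * a k else 0) * g k = 0 :=
    Finset.sum_eq_zero fun k hk => by
      have := (Finset.mem_Ico.1 hk).1
      rw [if_neg (by omega), if_neg (by omega), zero_mul]
  rw [h1, h2]
  simp; ring

theorem dd_rest (N m : ℕ) (hm : m < N) (a g : ℕ → ℝ) (t : ℝ) :
    ∑ k ∈ Finset.range N, a k * g k - (∑ k ∈ Finset.range m, a k * g k + t * (a m * g m)) =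
      ∑ k ∈ Finset.Ico m N, (if k = m then (1 - t) * a k else a k) * g k := by
  rw [← Finset.sum_range_add_sum_Ico _ hm.le, Finset.sum_eq_sum_Ico_succ_bot hm,
    Finset.sum_eq_sum_Ico_succ_bot hm]
  have h2 : ∑ k ∈ Finset.Ico (m + 1) N, (if k = m then (1 - t) * a k else a k) * g k =
      ∑ k ∈ Finset.Ico (m + 1) N, a k * g k :=
    Finset.sum_congr rfl fun k hk => by
      have := (Finset.mem_Ico.1 hk).1
      rw [if_neg (by omega)]
  rw [h2]
  simp; ring

theorem dd_step {Ω : Type*} {m0 : MeasurableSpace Ω} (μ : Measure Ω) [IsProbabilityMeasure μ]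
    (Z : ℕ → Ω → ℝ) (F : ℕ → MeasurableSpace Ω) (hF : ∀ m, F m ≤ m0)
    (hZF : ∀ j m, j ≤ m → Measurable[F m] (Z j)) (C : ℝ) (hC : 0 ≤ C)
    (hZb : ∀ j, ∀ᵐ ω ∂μ, |Z j ω| ≤ C) (d : ℕ → ℝ) (hd : ∀ i, 0 ≤ d i)
    (hcov : ∀ m k, m ≤ k → ∀ f : Ω → ℝ, StronglyMeasurable[F m] f → Integrable f μ →
      Integrable (fun ω => f ω * Z k ω) μ → |∫ ω, f ω * Z k ω ∂μ| ≤ d (k - m) * ∫ ω, |f ω| ∂μ)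
    (N : ℕ) (b : ℕ → ℝ) (hb : ∀ m, b m = C * ∑ k ∈ Finset.Ico m N, d (k - m))
    (K : ℝ) (q : ℕ) (hK : 2 * ((q : ℝ) + 1) ≤ K)
    (IH : ∀ a : ℕ → ℝ, (∀ k, 0 ≤ a k ∧ a k ≤ 1) →
      ∫ ω, |∑ k ∈ Finset.range N, a k * Z k ω| ^ q ∂μ ≤
        (K * ∑ k ∈ Finset.range N, a k * b k) ^ ((q : ℝ) / 2))
    (a : ℕ → ℝ) (ha : ∀ k, 0 ≤ a k ∧ a k ≤ 1) :
    ∫ ω, |∑ k ∈ Finset.range N, a k * Z k ω| ^ (q + 2) ∂μ ≤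
        (K * ∑ k ∈ Finset.range N, a k * b k) ^ (((q + 2 : ℕ) : ℝ) / 2) := by
  have hK0 : 0 ≤ K := le_trans (by positivity) hK
  have hb0 : ∀ m, 0 ≤ b m := fun m => by
    rw [hb]; exact mul_nonneg hC (Finset.sum_nonneg fun k _ => hd _)
  have hZm : ∀ j, Measurable (Z j) := fun j => (hZF j j le_rfl).mono (hF j) le_rfl
  have haZ : ∀ k ω, |Z k ω| ≤ C → |a k * Z k ω| ≤ C := fun k ω h => by
    rw [abs_mul, abs_of_nonneg (ha k).1]
    exact (mul_le_of_le_one_left (abs_nonneg _) (ha k).2).trans h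
  set V : ℕ → Ω → ℝ := fun m ω => ∑ k ∈ Finset.range m, a k * Z k ω with hV
  have hVF : ∀ m n, m ≤ n + 1 → Measurable[F n] (V m) := fun m n h =>
    Finset.measurable_fun_sum _ fun k hk =>
      (hZF k n (by have := Finset.mem_range.1 hk; omega)).const_mul _
  have hVm : ∀ m, Measurable (V m) := fun m => (hVF m m (by omega)).mono (hF m) le_rfl
  have hVb : ∀ m, m ≤ N → ∀ᵐ ω ∂μ, |V m ω| ≤ (N + 1) * C := by
    intro m hm
    filter_upwards [ae_all_iff.2 hZb] with ω h
    refine (Finset.abs_sum_le_sum_abs _ _).trans ?_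
    refine (Finset.sum_le_sum fun k _ => haZ k ω (h k)).trans ?_
    simp only [Finset.sum_const, Finset.card_range, nsmul_eq_mul]
    have : (m:ℝ) ≤ N := by exact_mod_cast hm
    gcongr; linarith
  have hYb : ∀ m, ∀ᵐ ω ∂μ, |a m * Z m ω| ≤ (N + 1) * C := by
    intro m
    filter_upwards [hZb m] with ω h
    refine (haZ m ω h).trans ?_
    have : (0:ℝ) ≤ N := Nat.cast_nonneg _
    nlinarith
  set L : ℕ → ℝ → ℝ := fun m t => ∫ ω, |V m ω + t * (a m * Z m ω)| ^ (q + 2) +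
        (q + 2) * (|V m ω + t * (a m * Z m ω)| ^ q * (V m ω + t * (a m * Z m ω))) *
          (V N ω - (V m ω + t * (a m * Z m ω))) ∂μ with hL
  set B : ℕ → ℝ := fun m => ∑ k ∈ Finset.range m, a k * b k with hB
  have hB0 : ∀ m, 0 ≤ B m := fun m => Finset.sum_nonneg fun k _ => mul_nonneg (ha k).1 (hb0 k)
  set r : ℝ := ((q + 2 : ℕ) : ℝ) / 2 with hr
  have hr1 : 1 ≤ r := by rw [hr]; push_cast; linarith [(Nat.cast_nonneg q : (0:ℝ) ≤ q)]
  have hr2 : r - 1 = (q : ℝ) / 2 := by rw [hr]; push_cast; ring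
  -- the key derivative bound
  have hder : ∀ m, m < N → ∀ t, 0 ≤ t → t ≤ 1 →
      (∫ ω, ((q:ℝ) + 2) * (q + 1) * (|V m ω + t * (a m * Z m ω)| ^ q * (a m * Z m ω) *
        (V N ω - (V m ω + t * (a m * Z m ω)))) ∂μ) ≤
      K * (a m * b m) * r * (K * (B m + t * (a m * b m))) ^ (r - 1) := by
    intro m hm t ht0 ht1
    set U : Ω → ℝ := fun ω => V m ω + t * (a m * Z m ω) with hU
    have hUF : Measurable[F m] U := (hVF m m (by omega)).add (((hZF m m le_rfl).const_mul _).const_mul _)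
    have hUm : Measurable U := hUF.mono (hF m) le_rfl
    have hUb : ∀ᵐ ω ∂μ, |U ω| ≤ 2 * ((N + 1) * C) := by
      filter_upwards [hVb m hm.le, hYb m] with ω h1 h2
      refine (abs_add_le _ _).trans ?_
      rw [abs_mul, abs_of_nonneg ht0]
      have := mul_le_of_le_one_left (abs_nonneg (a m * Z m ω)) ht1
      linarith
    set f : Ω → ℝ := fun ω => |U ω| ^ q * Z m ω with hf
    have hfF : Measurable[F m] f := by
      have h1 : Measurable[F m] (fun ω => |U ω| ^ q) :=
        (show Measurable (fun x : ℝ => |x| ^ q) by fun_prop).comp hUF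
      exact h1.mul (hZF m m le_rfl)
    have hfm : Measurable f := hfF.mono (hF m) le_rfl
    have hUq : Integrable (fun ω => |U ω| ^ q) μ := by
      refine Integrable.of_bound (by fun_prop) ((2 * ((N + 1) * C)) ^ q) ?_
      filter_upwards [hUb] with ω h
      rw [Real.norm_eq_abs, abs_pow, abs_abs]
      gcongr
    have hfi : Integrable f μ := hUq.mul_bdd (hZm m).aestronglyMeasurable (hZb m)
    have hfZ : ∀ k, Integrable (fun ω => f ω * Z k ω) μ := fun k =>
      hfi.mul_bdd (hZm k).aestronglyMeasurable (hZb k)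
    set w : ℕ → ℝ := fun k => if k = m then (1 - t) * a k else a k with hw
    have hw0 : ∀ k, 0 ≤ w k ∧ w k ≤ 1 := by
      intro k
      simp only [hw]
      split_ifs
      · exact ⟨mul_nonneg (by linarith) (ha k).1, mul_le_one₀ (by linarith) (ha k).1 (ha k).2⟩
      · exact ha k
    have hI0 : 0 ≤ ∫ ω, |f ω| ∂μ := integral_nonneg fun ω => abs_nonneg _
    have hfabs : ∫ ω, |f ω| ∂μ ≤ C * (K * (B m + t * (a m * b m))) ^ (r - 1) := by
      have h1 := IH (fun k => if k < m then a k else if k = m then t * a k else 0) (by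
        intro k
        split_ifs
        · exact ha k
        · exact ⟨mul_nonneg ht0 (ha k).1, mul_le_one₀ ht1 (ha k).1 (ha k).2⟩
        · simp)
      rw [dd_weight N m hm] at h1
      simp only [fun ω => dd_weight N m hm a (fun k => Z k ω) t] at h1
      rw [hr2]
      calc ∫ ω, |f ω| ∂μ ≤ ∫ ω, C * |U ω| ^ q ∂μ := by
            apply integral_mono_ae hfi.abs (hUq.const_mul C)
            filter_upwards [hZb m] with ω h
            simp only [hf, abs_mul, abs_pow, abs_abs]
            rw [mul_comm]
            gcongr
        _ = C * ∫ ω, |U ω| ^ q ∂μ := integral_const_mul _ _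
        _ ≤ _ := by gcongr
    have hint : (∫ ω, ((q:ℝ) + 2) * (q + 1) * (|U ω| ^ q * (a m * Z m ω) * (V N ω - U ω)) ∂μ) =
        ((q:ℝ) + 2) * (q + 1) * a m * ∑ k ∈ Finset.Ico m N, w k * ∫ ω, f ω * Z k ω ∂μ := by
      simp_rw [← integral_const_mul (w _)]
      rw [← integral_finsetSum _ (fun k _ => (hfZ k).const_mul _), ← integral_const_mul]
      congr 1
      funext ω
      have := dd_rest N m hm a (fun k => Z k ω) t
      change V N ω - U ω = _ at this
      rw [this]
      simp only [hf, Finset.mul_sum]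
      refine Finset.sum_congr rfl fun k _ => ?_
      simp only [hw]
      ring
    change (∫ ω, ((q:ℝ) + 2) * (q + 1) * (|U ω| ^ q * (a m * Z m ω) * (V N ω - U ω)) ∂μ) ≤ _
    rw [hint]
    have hsum : ∑ k ∈ Finset.Ico m N, w k * ∫ ω, f ω * Z k ω ∂μ ≤
        b m * (K * (B m + t * (a m * b m))) ^ (r - 1) := by
      calc _ ≤ ∑ k ∈ Finset.Ico m N, d (k - m) * ∫ ω, |f ω| ∂μ := by
            refine Finset.sum_le_sum fun k hk => ?_
            have h1 := hcov m k (Finset.mem_Ico.1 hk).1 f hfF.stronglyMeasurable hfi (hfZ k)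
            have h2 := le_abs_self (w k * ∫ ω, f ω * Z k ω ∂μ)
            rw [abs_mul, abs_of_nonneg (hw0 k).1] at h2
            exact h2.trans ((mul_le_of_le_one_left (abs_nonneg _) (hw0 k).2).trans h1)
        _ = (∑ k ∈ Finset.Ico m N, d (k - m)) * ∫ ω, |f ω| ∂μ := by rw [Finset.sum_mul]
        _ ≤ (∑ k ∈ Finset.Ico m N, d (k - m)) * (C * (K * (B m + t * (a m * b m))) ^ (r - 1)) := by
            gcongr
            exact Finset.sum_nonneg fun k _ => hd _
        _ = _ := by rw [hb]; ring
    have hP : 0 ≤ (K * (B m + t * (a m * b m))) ^ (r - 1) := by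
      apply Real.rpow_nonneg
      exact mul_nonneg hK0 (add_nonneg (hB0 m) (mul_nonneg ht0 (mul_nonneg (ha m).1 (hb0 m))))
    calc _ ≤ ((q:ℝ) + 2) * (q + 1) * a m * (b m * (K * (B m + t * (a m * b m))) ^ (r - 1)) := by
          gcongr
          exact mul_nonneg (by positivity) (ha m).1
      _ = (2 * ((q:ℝ) + 1)) * (r * (a m * (b m * (K * (B m + t * (a m * b m))) ^ (r - 1)))) := by
          rw [hr]; push_cast; ring
      _ ≤ K * (r * (a m * (b m * (K * (B m + t * (a m * b m))) ^ (r - 1)))) := by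
          gcongr
          exact mul_nonneg (by linarith) (mul_nonneg (ha m).1 (mul_nonneg (hb0 m) hP))
      _ = _ := by ring
  have main : ∀ m, m ≤ N → L m 0 ≤ (K * B m) ^ r := by
    intro m
    induction m with
    | zero =>
      intro _
      have : L 0 0 = 0 := by simp [hL, hV]
      rw [this]
      exact Real.rpow_nonneg (mul_nonneg hK0 (hB0 0)) _
    | succ m ih =>
      intro hm
      have ih := ih (by omega)
      have e1 : L (m + 1) 0 = L m 1 := by
        simp only [hL, hV, Finset.sum_range_succ, zero_mul, add_zero, one_mul]
      have e2 : B (m + 1) = B m + 1 * (a m * b m) := by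
        simp only [hB, Finset.sum_range_succ, one_mul]
      have hLd : ∀ t, HasDerivAt (L m) _ t := fun t =>
        dd_integral μ q (V m) (fun ω => a m * Z m ω) (V N) (hVm m) ((hZm m).const_mul _) (hVm N)
          ((N + 1) * C) (hVb m (by omega)) (hYb m) (hVb N le_rfl) t
      have hGd : ∀ t, HasDerivAt (fun t : ℝ => (K * (B m + t * (a m * b m))) ^ r)
          (K * (a m * b m) * r * (K * (B m + t * (a m * b m))) ^ (r - 1)) t := by
        intro t
        have h1 : HasDerivAt (fun t : ℝ => K * (B m + t * (a m * b m))) (K * (a m * b m)) t := by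
          simpa using (((hasDerivAt_id t).mul_const (a m * b m)).const_add (B m)).const_mul K
        exact h1.rpow_const (Or.inr hr1)
      have hanti : AntitoneOn (L m - fun t : ℝ => (K * (B m + t * (a m * b m))) ^ r) (Set.Icc 0 1) := by
        apply antitoneOn_of_deriv_nonpos (convex_Icc 0 1)
        · exact fun t _ => ((hLd t).sub (hGd t)).continuousAt.continuousWithinAt
        · exact fun t _ => ((hLd t).sub (hGd t)).differentiableAt.differentiableWithinAt
        · intro t ht
          rw [interior_Icc] at ht
          rw [((hLd t).sub (hGd t)).deriv]
          exact sub_nonpos.2 (hder m (by omega) t ht.1.le ht.2.le)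
      have := hanti (Set.left_mem_Icc.2 zero_le_one) (Set.right_mem_Icc.2 zero_le_one) zero_le_one
      simp only [Pi.sub_apply, zero_mul, add_zero] at this
      rw [e1, e2]
      linarith
  have hfin := main N le_rfl
  simpa [hL] using hfin

theorem dd_all {Ω : Type*} {m0 : MeasurableSpace Ω} (μ : Measure Ω) [IsProbabilityMeasure μ]
    (Z : ℕ → Ω → ℝ) (F : ℕ → MeasurableSpace Ω) (hF : ∀ m, F m ≤ m0)
    (hZF : ∀ j m, j ≤ m → Measurable[F m] (Z j)) (C : ℝ) (hC : 0 ≤ C)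
    (hZb : ∀ j, ∀ᵐ ω ∂μ, |Z j ω| ≤ C) (d : ℕ → ℝ) (hd : ∀ i, 0 ≤ d i)
    (hcov : ∀ m k, m ≤ k → ∀ f : Ω → ℝ, StronglyMeasurable[F m] f → Integrable f μ →
      Integrable (fun ω => f ω * Z k ω) μ → |∫ ω, f ω * Z k ω ∂μ| ≤ d (k - m) * ∫ ω, |f ω| ∂μ)
    (N : ℕ) (b : ℕ → ℝ) (hb : ∀ m, b m = C * ∑ k ∈ Finset.Ico m N, d (k - m))
    (p : ℕ) (hp : 2 ≤ p) (K : ℝ) (hK : 2 * (p : ℝ) ≤ K) (q : ℕ) (hq : q ≤ p) :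
    ∀ a : ℕ → ℝ, (∀ k, 0 ≤ a k ∧ a k ≤ 1) →
      ∫ ω, |∑ k ∈ Finset.range N, a k * Z k ω| ^ q ∂μ ≤
        (K * ∑ k ∈ Finset.range N, a k * b k) ^ ((q : ℝ) / 2) := by
  have step := dd_step μ Z F hF hZF C hC hZb d hd hcov N b hb K
  have hp' : (2:ℝ) ≤ p := by exact_mod_cast hp
  have P0 : ∀ a : ℕ → ℝ, (∀ k, 0 ≤ a k ∧ a k ≤ 1) →
      ∫ ω, |∑ k ∈ Finset.range N, a k * Z k ω| ^ 0 ∂μ ≤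
        (K * ∑ k ∈ Finset.range N, a k * b k) ^ (((0:ℕ) : ℝ) / 2) := by
    intro a _; simp
  have P2 := step 0 (by push_cast; linarith) P0
  induction q using Nat.twoStepInduction with
  | zero => exact P0
  | one =>
    intro a ha
    have h2 := P2 a ha
    have hZm : ∀ j, Measurable (Z j) := fun j => (hZF j j le_rfl).mono (hF j) le_rfl
    have hS : MemLp (fun ω => |∑ k ∈ Finset.range N, a k * Z k ω|) 2 μ := by
      refine MemLp.of_bound (Measurable.aestronglyMeasurable (by fun_prop)) (∑ k ∈ Finset.range N, C) ?_
      filter_upwards [ae_all_iff.2 hZb] with ω h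
      rw [Real.norm_eq_abs, abs_abs]
      refine (Finset.abs_sum_le_sum_abs _ _).trans (Finset.sum_le_sum fun k _ => ?_)
      rw [abs_mul, abs_of_nonneg (ha k).1]
      exact (mul_le_of_le_one_left (abs_nonneg _) (ha k).2).trans (h k)
    have hv := variance_nonneg (fun ω => |∑ k ∈ Finset.range N, a k * Z k ω|) μ
    rw [variance_eq_sub hS] at hv
    simp only [Pi.pow_apply] at hv
    simp only [pow_one]
    have e1 : ((0 + 2 : ℕ) : ℝ) / 2 = 1 := by norm_num
    rw [e1, Real.rpow_one] at h2
    have e2 : ((1 : ℕ) : ℝ) / 2 = 1 / 2 := by norm_num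
    rw [e2, ← Real.sqrt_eq_rpow]
    apply Real.le_sqrt_of_sq_le
    simp only [zero_add] at h2
    linarith
  | more q ih _ =>
    refine step q ?_ (ih (by omega))
    have : ((q + 2 : ℕ) : ℝ) ≤ p := by exact_mod_cast hq
    push_cast at this
    linarith

/-- Dedecker–Prieur moment inequality: for a strictly stationary mean-zero
bounded sequence, `E|S_n|^p ≤ (8C²p Σ_{i=0}^{n−1}(n−i)φ(i))^{p/2}`. -/
theorem moment_ineq_phi_mixing (m0 : MeasurableSpace Ω) (μ : Measure Ω)
    [IsProbabilityMeasure μ] (X : ℤ → Ω → ℝ)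
    (hmeas : ∀ t, Measurable (X t))
    (hstat : ∀ k : ℤ, IdentDistrib (fun ω (t : ℤ) => X t ω)
      (fun ω (t : ℤ) => X (t + k) ω) μ μ)
    (hmean : (∫ ω, X 0 ω ∂μ) = 0) (C : ℝ)
    (hbdd : ∀ᵐ ω ∂μ, |X 0 ω| ≤ C)
    (p : ℕ) (hp : 2 ≤ p) (n : ℕ) (hn : 1 ≤ n) :
    (∫ ω, |∑ i ∈ range n, X (i + 1) ω| ^ p ∂μ) ≤
      (8 * C ^ 2 * (p : ℝ) *
          ∑ i ∈ range n, ((n - i : ℕ) : ℝ) * phiCoef m0 μ X i) ^ ((p : ℝ) / 2) := by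
  have hcomp : ∀ k : ℤ, IdentDistrib (X 0) (X k) μ μ := by
    intro k
    have h := (hstat k).comp (u := fun x : ℤ → ℝ => x 0) (measurable_pi_apply 0)
    have e : (fun x : ℤ → ℝ => x 0) ∘ (fun ω (t : ℤ) => X (t + k) ω) = X k := by
      funext ω; simp
    rw [e] at h
    exact h
  have hmeank : ∀ k : ℤ, ∫ ω, X k ω ∂μ = 0 := fun k => by rw [← (hcomp k).integral_eq, hmean]
  have hbddk : ∀ k : ℤ, ∀ᵐ ω ∂μ, |X k ω| ≤ C := fun k =>
    (hcomp k).ae_snd (p := fun x => |x| ≤ C) (measurableSet_le (by fun_prop) measurable_const) hbdd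
  have hC : 0 ≤ C := by
    obtain ⟨ω, h⟩ := hbdd.exists
    exact (abs_nonneg _).trans h
  have hint : ∀ k : ℤ, Integrable (X k) μ := fun k =>
    Integrable.of_bound (hmeas k).aestronglyMeasurable C (hbddk k)
  have key := dd_all μ (fun i : ℕ => X (i + 1)) (fun m : ℕ => pastSigma X (m + 1))
    (fun m => phi_past_le m0 X hmeas _)
    (fun j m hjm => by
      have h1 : MeasurableSpace.comap (X (j + 1)) inferInstance ≤ pastSigma X (m + 1) :=
        le_iSup₂_of_le ((j:ℤ) + 1) (by omega) le_rfl
      exact (comap_measurable (X (j + 1))).mono h1 le_rfl) C hC (fun j => hbddk _)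
    (fun i => 2 * C * phiCoef m0 μ X i)
    (fun i => mul_nonneg (by positivity) (phi_nonneg m0 μ X i))
    (by
      intro m k hmk f hf hfi hfZ
      refine phi_cov _ m0 (phi_past_le m0 X hmeas _) μ _ (hint _) _ ?_ f hf hfi hfZ
      intro A hA
      have e : ((k:ℤ) + 1) = ((m:ℤ) + 1) + ((k - m : ℕ) : ℤ) := by omega
      rw [e]
      exact phi_setint m0 μ X hmeas C (k - m) (m + 1) (hmeank _) (hbddk _) A hA)
    n _ (fun m => rfl) p hp (4 * p) (by linarith [(Nat.cast_nonneg p : (0:ℝ) ≤ p)]) p le_rfl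
    (fun _ => 1) (fun _ => by norm_num)
  simp only [one_mul] at key
  have hsum : ∑ m ∈ Finset.range n, ∑ k ∈ Finset.Ico m n, phiCoef m0 μ X (k - m) =
      ∑ i ∈ Finset.range n, ((n - i : ℕ) : ℝ) * phiCoef m0 μ X i := by
    have h1 : ∀ m ∈ Finset.range n, ∑ k ∈ Finset.Ico m n, phiCoef m0 μ X (k - m) =
        ∑ i ∈ Finset.range (n - m), phiCoef m0 μ X i := by
      intro m _
      rw [Finset.sum_Ico_eq_sum_range]
      simp
    rw [Finset.sum_congr rfl h1, Finset.sum_comm' (t' := Finset.range n) (s' := fun i => Finset.range (n - i))]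
    · simp
    · intro x y; simp only [Finset.mem_range]; omega
  have e : 8 * C ^ 2 * (p : ℝ) * ∑ i ∈ Finset.range n, ((n - i : ℕ) : ℝ) * phiCoef m0 μ X i =
      4 * (p : ℝ) * ∑ m ∈ Finset.range n, C * ∑ k ∈ Finset.Ico m n, 2 * C * phiCoef m0 μ X (k - m) := by
    rw [← hsum]
    simp only [← Finset.mul_sum]
    ring
  rw [e]
  exact key
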